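/- arXiv:1812.11086 — 4 statements merged into one kernel-verified Lean document; each statement's English description precedes it below -/
import Mathlib

section
/- Let A be a C*-algebra with closed two-sided ideals I and J such that x·y = 0 for all x ∈ I and y ∈ J. If A/I is unital (there exists u ∈ A with u·a − a ∈ I and a·u − a ∈ I for all a ∈ A) and A/J is unital (there exists v ∈ A with v·a − a ∈ J and a·v − a ∈ J for all a ∈ A), then A is unital: there exists w ∈ A with w·a = a and a·w = a for all a ∈ A. -/
/-!
If `u` and `v` are units modulo `I` and `J`, then `w = u + v - u * v` is a unit modulo `I ⊓ J`:
formally `1 - w = (1 - u) * (1 - v)`, and multiplication by `1 - u` maps `A` into `I` and preserves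
`J`, while multiplication by `1 - v` maps `A` into `J` and preserves `I`. The intersection of
orthogonal ideals squares to zero, so it vanishes in a semiprime ring; a C⋆-algebra is semiprime
by the C⋆-identity.
-/

/-- A closed two-sided ideal of a (possibly non-unital) C*-algebra, given as a set:
a topologically closed linear subspace absorbing multiplication on both sides. -/
structure IsClosedTwoSidedIdeal {A : Type*} [NonUnitalCStarAlgebra A] (I : Set A) : Prop where
  isClosed : IsClosed I
  zero_mem : (0 : A) ∈ I
  add_mem : ∀ x y : A, x ∈ I → y ∈ I → x + y ∈ I
  smul_mem : ∀ (c : ℂ) (x : A), x ∈ I → c • x ∈ I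
  mul_mem_left : ∀ a x : A, x ∈ I → a * x ∈ I
  mul_mem_right : ∀ a x : A, x ∈ I → x * a ∈ I

/-- `e` is a two-sided unit modulo the two-sided ideal `I`, i.e. the class of `e` is the identity of
the quotient ring. This is phrased with differences because a non-unital ring has no `1`; for
`I = ⊥` it says that `e` is the identity of the ring itself. -/
def IsUnitModulo {A : Type*} [NonUnitalNonAssocRing A] (I : TwoSidedIdeal A) (e : A) : Prop :=
  ∀ a : A, e * a - a ∈ I ∧ a * e - a ∈ I

/-- A semiprime ring, by the elementwise criterion `z A z = 0 → z = 0`, which makes sense without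
a unit. It is the hypothesis under which orthogonal ideals intersect trivially. -/
def IsSemiprimeRing (A : Type*) [NonUnitalRing A] : Prop :=
  ∀ z : A, (∀ a : A, z * a * z = 0) → z = 0

lemma isUnitModulo_bot_iff {A : Type*} [NonUnitalNonAssocRing A] {e : A} :
    IsUnitModulo ⊥ e ↔ ∀ a : A, e * a = a ∧ a * e = a := by
  simp only [IsUnitModulo, TwoSidedIdeal.mem_bot, sub_eq_zero]

lemma IsUnitModulo.inf {A : Type*} [NonUnitalRing A] {I J : TwoSidedIdeal A} {u v : A}
    (hu : IsUnitModulo I u) (hv : IsUnitModulo J v) :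
    IsUnitModulo (I ⊓ J) (u + v - u * v) := by
  intro a
  have left_factor : (u + v - u * v) * a - a = -(u * (v * a - a) - (v * a - a)) := by
    noncomm_ring
  have right_factor : a * (u + v - u * v) - a = -((a * u - a) * v - (a * u - a)) := by
    noncomm_ring
  rw [left_factor, right_factor, neg_mem_iff, neg_mem_iff, TwoSidedIdeal.mem_inf,
    TwoSidedIdeal.mem_inf]
  have hva : v * a - a ∈ J := (hv a).1
  have hau : a * u - a ∈ I := (hu a).2
  exact ⟨⟨(hu _).1, J.sub_mem (J.mul_mem_left _ _ hva) hva⟩,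
    ⟨I.sub_mem (I.mul_mem_right _ _ hau) hau, (hv _).2⟩⟩

lemma IsSemiprimeRing.inf_eq_bot_of_mul_eq_zero {A : Type*} [NonUnitalRing A]
    (hA : IsSemiprimeRing A) {I J : TwoSidedIdeal A} (horth : ∀ x ∈ I, ∀ y ∈ J, x * y = 0) :
    I ⊓ J = ⊥ := by
  refine eq_bot_iff.2 fun z hz => ?_
  obtain ⟨hzI, hzJ⟩ := (TwoSidedIdeal.mem_inf A).1 hz
  exact (TwoSidedIdeal.mem_bot A).2 <| hA z fun a => horth _ (I.mul_mem_right z a hzI) z hzJ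

lemma isSemiprimeRing_of_star_mul_self_eq_zero {A : Type*} [NonUnitalRing A] [StarMul A]
    (hA : ∀ x : A, star x * x = 0 → x = 0) : IsSemiprimeRing A := by
  intro z hz
  refine hA z (hA (star z * z) ?_)
  calc star (star z * z) * (star z * z) = star z * (z * star z * z) := by
        simp only [star_mul, star_star, mul_assoc]
    _ = 0 := by rw [hz, mul_zero]

lemma isSemiprimeRing_of_cStarRing (A : Type*) [NonUnitalNormedRing A] [StarRing A]
    [CStarRing A] : IsSemiprimeRing A :=
  isSemiprimeRing_of_star_mul_self_eq_zero fun x => (CStarRing.star_mul_self_eq_zero_iff x).1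

lemma IsClosedTwoSidedIdeal.exists_twoSidedIdeal_coe_eq {A : Type*} [NonUnitalCStarAlgebra A]
    {I : Set A} (hI : IsClosedTwoSidedIdeal I) : ∃ K : TwoSidedIdeal A, (K : Set A) = I := by
  have neg_mem {x : A} (hx : x ∈ I) : -x ∈ I := by
    simpa only [neg_one_smul] using hI.smul_mem (-1) x hx
  exact ⟨.mk' I hI.zero_mem (hI.add_mem _ _) neg_mem (hI.mul_mem_left _ _) (hI.mul_mem_right _ _),
    TwoSidedIdeal.coe_mk' ..⟩

theorem unital_of_orthogonal_ideals_with_unital_quotients_general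
    {A : Type*} [NonUnitalRing A] (hA : IsSemiprimeRing A) {I J : TwoSidedIdeal A}
    (horth : ∀ x ∈ I, ∀ y ∈ J, x * y = 0)
    (hAmodI : ∃ u : A, IsUnitModulo I u) (hAmodJ : ∃ v : A, IsUnitModulo J v) :
    ∃ w : A, ∀ a : A, w * a = a ∧ a * w = a := by
  obtain ⟨u, hu⟩ := hAmodI
  obtain ⟨v, hv⟩ := hAmodJ
  have hw : IsUnitModulo (I ⊓ J) (u + v - u * v) := hu.inf hv
  rw [hA.inf_eq_bot_of_mul_eq_zero horth] at hw
  exact ⟨u + v - u * v, isUnitModulo_bot_iff.1 hw⟩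

/-- If `I, J` are closed two-sided ideals of a C*-algebra `A` with `I·J = 0`
and both `A/I` and `A/J` are unital, then `A` is unital. -/
theorem unital_of_orthogonal_ideals_with_unital_quotients
    {A : Type*} [NonUnitalCStarAlgebra A] {I J : Set A}
    (hI : IsClosedTwoSidedIdeal I) (hJ : IsClosedTwoSidedIdeal J)
    (horth : ∀ x ∈ I, ∀ y ∈ J, x * y = 0)
    (hAmodI : ∃ u : A, ∀ a : A, u * a - a ∈ I ∧ a * u - a ∈ I)
    (hAmodJ : ∃ v : A, ∀ a : A, v * a - a ∈ J ∧ a * v - a ∈ J) :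
    ∃ w : A, ∀ a : A, w * a = a ∧ a * w = a := by
  obtain ⟨I, rfl⟩ := hI.exists_twoSidedIdeal_coe_eq
  obtain ⟨J, rfl⟩ := hJ.exists_twoSidedIdeal_coe_eq
  exact unital_of_orthogonal_ideals_with_unital_quotients_general
    (isSemiprimeRing_of_cStarRing A) horth hAmodI hAmodJ
end

section
/- Let H be a complex Hilbert space and let A be a closed *-subalgebra of the bounded operators on H all of whose elements are compact operators. Then QM(A) = M(A): every quasi-centralizer of A comes from a multiplier. -/
/-!
Let `f : A → A` be a bounded left module map. Along an approximate unit `e` of contractions, the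
bounded family `f e` clusters in the weak operator topology at some `T ∈ B(H)`, and letting `e`
tend to the unit in `f (x * e) = x * f e` gives `f x = x * T`. In particular `e * T = f e → T`
weakly, hence strongly, since contractions tending weakly to the identity at a vector also tend to
it in norm. For `y ∈ A` the operator `T * y` is compact, so `e * (T * y) → T * y` even in norm;
as `e * (T * y) = f e * y ∈ A`, the operator `T * y` lies in the closed algebra `A`. Hence `f`
followed by right multiplication by `y` is right multiplication by an element of `A`.

Let now `m` be a quasi-centralizer. Applied to `f = m (·, y)`, this puts `m (·, y * y')` in the
range of the isometry `t ↦ (x ↦ x * t)` from `A` to its bounded operators. That range is closed and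
products are dense in `A`, so every `m (·, y)` is of the form `x ↦ x * L y`. The mirror image under
the involution gives `m (x, ·) = (y ↦ R x * y)`, and `(L, R)` is the double centralizer.
-/

/-- A quasi-centralizer of `A`: a continuous bilinear map `m : A × A → A` satisfying
`m (a*x) (y*b) = a * m x y * b` for all `a x y b`. -/
def IsQuasiCentralizer {A : Type*} [NonUnitalNormedRing A] [NormedSpace ℂ A]
    (m : A →L[ℂ] A →L[ℂ] A) : Prop :=
  ∀ a x y b : A, m (a * x) (y * b) = a * m x y * b

/-- The quasi-centralizer `m` comes from a multiplier, i.e. there is a double centralizer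
`(L, R)` of `A` with `m x y = x * L y`. -/
def ComesFromMultiplier {A : Type*} [NonUnitalNormedRing A] [NormedSpace ℂ A]
    (m : A →L[ℂ] A →L[ℂ] A) : Prop :=
  ∃ L R : A →L[ℂ] A, (∀ x y : A, R x * y = x * L y) ∧ ∀ x y : A, m x y = x * L y

/-- `QM(A) = M(A)`: every quasi-centralizer of `A` comes from a multiplier. -/
def QMeqM (A : Type*) [NonUnitalNormedRing A] [NormedSpace ℂ A] : Prop :=
  ∀ m : A →L[ℂ] A →L[ℂ] A, IsQuasiCentralizer m → ComesFromMultiplier m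

open Filter Topology InnerProductSpace

section WeakOperatorTopology

variable {𝕜 E H ι : Type*} [RCLike 𝕜] [SeminormedAddCommGroup E] [NormedSpace 𝕜 E]
  [NormedAddCommGroup H] [InnerProductSpace 𝕜 H]

lemma tendsto_of_tendsto_inner_of_norm_le {l : Filter ι} {v : ι → H} {w : H}
    (hv : ∀ᶠ i in l, ‖v i‖ ≤ ‖w‖) (h : Tendsto (fun i => ⟪w, v i⟫_𝕜) l (𝓝 ⟪w, w⟫_𝕜)) :
    Tendsto v l (𝓝 w) := by
  have hre : Tendsto (fun i => 2 * (‖w‖ ^ 2 - RCLike.re ⟪w, v i⟫_𝕜)) l (𝓝 0) := by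
    have := (((RCLike.continuous_re.tendsto _).comp h).const_sub (‖w‖ ^ 2)).const_mul 2
    rwa [inner_self_eq_norm_sq, sub_self, mul_zero] at this
  have hsq : Tendsto (fun i => ‖v i - w‖ ^ 2) l (𝓝 0) := by
    refine squeeze_zero' (.of_forall fun i => by positivity) ?_ hre
    filter_upwards [hv] with i hi
    have : ‖v i‖ ^ 2 ≤ ‖w‖ ^ 2 := by gcongr
    rw [norm_sub_sq (𝕜 := 𝕜), inner_re_symm]
    linarith
  simpa [tendsto_iff_norm_sub_tendsto_zero] using hsq.sqrt

variable [CompleteSpace H]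

lemma exists_tendsto_inner_of_eventually_norm_le (u : Ultrafilter ι) {v : ι → H} {C : ℝ}
    (hv : ∀ᶠ i in u, ‖v i‖ ≤ C) :
    ∃ w : H, ‖w‖ ≤ C ∧ ∀ y, Tendsto (fun i => ⟪y, v i⟫_𝕜) u (𝓝 ⟪y, w⟫_𝕜) := by
  let φ (w : H) : WeakDual 𝕜 H := StrongDual.toWeakDual (toDual 𝕜 H w)
  have hφv : ∀ᶠ i in u, φ (v i) ∈ WeakDual.toStrongDual ⁻¹' Metric.closedBall 0 C := by
    filter_upwards [hv] with i hi
    simpa [φ] using hi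
  obtain ⟨ψ, hψ, hlim⟩ := (WeakDual.isCompact_closedBall 0 C).ultrafilter_le_nhds'
    (u.map fun i => φ (v i)) hφv
  obtain ⟨w, rfl⟩ : ∃ w, φ w = ψ := (toDual 𝕜 H).surjective ψ
  refine ⟨w, by simpa [φ] using hψ, fun y => ?_⟩
  have hy : Tendsto (fun i => ⟪v i, y⟫_𝕜) u (𝓝 ⟪w, y⟫_𝕜) :=
    ((WeakDual.eval_continuous y).tendsto _).comp hlim
  simpa [Function.comp_def] using (RCLike.continuous_conj.tendsto _).comp hy

open ContinuousLinearMapWOT in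
lemma isCompact_setOf_norm_toCLM_le (C : ℝ) : IsCompact {T : E →WOT[𝕜] H | ‖toCLM T‖ ≤ C} := by
  refine isCompact_iff_ultrafilter_le_nhds'.2 fun u hu => ?_
  obtain ⟨T₀, hT₀⟩ := u.nonempty_of_mem hu
  have hC : 0 ≤ C := (norm_nonneg _).trans hT₀
  have hlim (x : E) : ∃ w : H, ‖w‖ ≤ C * ‖x‖ ∧
      ∀ y, Tendsto (fun T : E →WOT[𝕜] H => ⟪y, T x⟫_𝕜) u (𝓝 ⟪y, w⟫_𝕜) :=
    exists_tendsto_inner_of_eventually_norm_le u <| by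
      filter_upwards [hu] with T hT using (toCLM T).le_of_opNorm_le hT x
  choose w hw hlim using hlim
  let T : E →ₗ[𝕜] H :=
    { toFun := w
      map_add' x x' := ext_inner_left 𝕜 fun y => tendsto_nhds_unique (hlim (x + x') y) <| by
        simpa [inner_add_right] using (hlim x y).add (hlim x' y)
      map_smul' c x := ext_inner_left 𝕜 fun y => tendsto_nhds_unique (hlim (c • x) y) <| by
        simpa [inner_smul_right] using (hlim x y).const_mul c }
  exact ⟨ofCLM (T.mkContinuous C hw), T.mkContinuous_norm_le hC hw,
    le_nhds_iff_forall_inner_apply_le_nhds.2 hlim⟩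

end WeakOperatorTopology

section UniformConvergence

variable {𝕜 E F G ι : Type*} [NontriviallyNormedField 𝕜]
  [SeminormedAddCommGroup E] [NormedSpace 𝕜 E] [SeminormedAddCommGroup F] [NormedSpace 𝕜 F]
  [SeminormedAddCommGroup G] [NormedSpace 𝕜 G]
  {l : Filter ι} {A : ι → F →L[𝕜] G} {A₀ : F →L[𝕜] G} {C : ℝ}

lemma tendstoUniformlyOn_of_totallyBounded {s : Set F} (hs : TotallyBounded s)
    (hA : ∀ᶠ i in l, ‖A i‖ ≤ C) (hlim : ∀ x ∈ s, Tendsto (A · x) l (𝓝 (A₀ x))) :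
    TendstoUniformlyOn (A · ·) A₀ l s := by
  rw [Metric.tendstoUniformlyOn_iff]
  intro ε hε
  obtain ⟨M, hM, hAM, hA₀M⟩ : ∃ M > 0, (∀ᶠ i in l, ‖A i‖ ≤ M) ∧ ‖A₀‖ ≤ M :=
    ⟨max 1 (max C ‖A₀‖), by positivity, hA.mono fun i hi => by simp [hi], by simp⟩
  obtain ⟨t, hts, ht, hcover⟩ :=
    Metric.finite_approx_of_totallyBounded hs (ε / (3 * M)) (by positivity)
  have hlim_t : ∀ᶠ i in l, ∀ z ∈ t, dist (A i z) (A₀ z) < ε / 3 :=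
    ht.eventually_all.2 fun z hz => Metric.tendsto_nhds.1 (hlim z (hts hz)) _ (by positivity)
  filter_upwards [hAM, hlim_t] with i hi hit x hx
  obtain ⟨z, hz, hxz⟩ := Set.mem_iUnion₂.1 (hcover hx)
  have hsmall (B : F →L[𝕜] G) (hB : ‖B‖ ≤ M) : dist (B x) (B z) < ε / 3 := by
    calc dist (B x) (B z) ≤ M * dist x z := by
          simpa [dist_eq_norm] using B.le_of_opNorm_le hB (x - z)
      _ < M * (ε / (3 * M)) := by gcongr; exact hxz
      _ = ε / 3 := by field_simp
  calc dist (A₀ x) (A i x)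
      ≤ dist (A₀ x) (A₀ z) + dist (A₀ z) (A i z) + dist (A i z) (A i x) := dist_triangle4 ..
    _ < ε / 3 + ε / 3 + ε / 3 := by
        rw [dist_comm (A₀ z), dist_comm (A i z) (A i x)]
        gcongr
        exacts [hsmall A₀ hA₀M, hit z hz, hsmall (A i) hi]
    _ = ε := by ring

lemma tendsto_comp_of_isCompactOperator {K : E →L[𝕜] F} (hK : IsCompactOperator K)
    (hA : ∀ᶠ i in l, ‖A i‖ ≤ C) (hlim : ∀ x, Tendsto (fun i => A i (K x)) l (𝓝 (A₀ (K x)))) :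
    Tendsto (fun i => A i ∘L K) l (𝓝 (A₀ ∘L K)) := by
  refine (UniformConvergenceCLM.tendsto_iff_tendstoUniformlyOn (RingHom.id 𝕜) G
    {s : Set E | Bornology.IsVonNBounded 𝕜 s}).2 fun s hs => ?_
  obtain ⟨Q, hQ, hsQ⟩ :=
    IsCompactOperator.image_subset_compact_of_isVonNBounded (f := K.toLinearMap) hK hs
  have hunif : TendstoUniformlyOn (A · ·) A₀ l (K '' s) :=
    tendstoUniformlyOn_of_totallyBounded (hQ.totallyBounded.subset hsQ) hA <|
      Set.forall_mem_image.2 fun x _ => hlim x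
  exact (hunif.comp K).mono (Set.subset_preimage_image K s)

end UniformConvergence

lemma exists_comp_eq_of_denseRange {𝕜 E F G ι : Type*} [NontriviallyNormedField 𝕜]
    [SeminormedAddCommGroup E] [NormedSpace 𝕜 E] [NormedAddCommGroup F] [NormedSpace 𝕜 F]
    [CompleteSpace F] [NormedAddCommGroup G] [NormedSpace 𝕜 G] [CompleteSpace G]
    {J : F →L[𝕜] G} (hJ : IsClosedEmbedding J) {φ : E →L[𝕜] G} {p : ι → E} (hp : DenseRange p)
    (hφ : ∀ i, φ (p i) ∈ Set.range J) : ∃ L : E →L[𝕜] F, J ∘L L = φ := by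
  have hmem (x : E) : φ x ∈ J.range :=
    hp.induction_on x (hJ.isClosed_range.preimage φ.continuous) hφ
  let e := J.equivRange hJ.injective hJ.isClosed_range
  refine ⟨e.symm ∘L φ.codRestrict J.range hmem, ?_⟩
  ext x
  exact congrArg Subtype.val (e.apply_symm_apply ⟨φ x, hmem x⟩)

section ApproximateUnit

lemma denseRange_mul_of_isApproximateUnit {A : Type*} [TopologicalSpace A] [Mul A] {l : Filter A}
    (hl : l.IsApproximateUnit) : DenseRange fun p : A × A => p.1 * p.2 := fun x =>
  have := hl.neBot
  mem_closure_of_tendsto (hl.tendsto_mul_left x) (.of_forall fun e => ⟨(x, e), rfl⟩)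

lemma exists_isApproximateUnit_norm_le_one (A : Type*) [NonUnitalCStarAlgebra A] :
    ∃ l : Filter A, l.IsApproximateUnit ∧ ∀ᶠ e in l, ‖e‖ ≤ 1 := by
  let := CStarAlgebra.spectralOrder A
  have := CStarAlgebra.spectralOrderedRing A
  have hl := CStarAlgebra.increasingApproximateUnit A
  exact ⟨_, hl.toIsApproximateUnit, hl.eventually_norm⟩

variable {A : Type*} [NonUnitalNormedRing A] [NormedSpace ℂ A] {m : A →L[ℂ] A →L[ℂ] A}
  {l : Filter A}

lemma IsQuasiCentralizer.map_mul_left (hm : IsQuasiCentralizer m) (hl : l.IsApproximateUnit)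
    (a x y : A) : m (a * x) y = a * m x y := by
  have := hl.neBot
  have h : Tendsto (fun e => m (a * x) (y * e)) l (𝓝 (m (a * x) y)) :=
    ((m (a * x)).continuous.tendsto y).comp (hl.tendsto_mul_left y)
  simp only [hm a x y] at h
  exact tendsto_nhds_unique h (hl.tendsto_mul_left _)

lemma IsQuasiCentralizer.map_mul_right (hm : IsQuasiCentralizer m) (hl : l.IsApproximateUnit)
    (x y b : A) : m x (y * b) = m x y * b := by
  have := hl.neBot
  have h : Tendsto (fun e => m (e * x) (y * b)) l (𝓝 (m x (y * b))) :=
    ((m.flip (y * b)).continuous.tendsto x).comp (hl.tendsto_mul_right x)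
  simp only [hm _ x y b, mul_assoc] at h
  exact tendsto_nhds_unique h (hl.tendsto_mul_right _)

end ApproximateUnit

section RightCentralizer

/-- `RM(A) = M(A)`: every right centralizer of `A`, i.e. every bounded left module map
`R : A → A`, is the right half of a double centralizer `(L, R)`. Only a bare function `L` is asked
for, since in a C⋆-algebra the identity `R x * y = x * L y` makes it linear and continuous. -/
def RMeqM (A : Type*) [NonUnitalNormedRing A] [NormedSpace ℂ A] : Prop :=
  ∀ R : A →L[ℂ] A, (∀ a x, R (a * x) = a * R x) → ∃ L : A → A, ∀ x y, R x * y = x * L y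

lemma RMeqM.exists_right {A : Type*} [NonUnitalNormedRing A] [NormedSpace ℂ A] [StarRing A]
    [ContinuousStar A] [StarModule ℂ A] (hA : RMeqM A)
    (L : A →L[ℂ] A) (hL : ∀ x a, L (x * a) = L x * a) :
    ∃ R : A → A, ∀ x y, R x * y = x * L y := by
  let conj : A →L⋆[ℂ] A := (starL ℂ : A ≃L⋆[ℂ] A)
  obtain ⟨L', hL'⟩ := hA (conj.comp (L.comp conj)) (by simp [conj, hL])
  refine ⟨fun x => star (L' (star x)), fun x y => star_injective ?_⟩
  simpa [conj] using (hL' (star y) (star x)).symm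

theorem RMeqM.qMeqM {A : Type*} [NonUnitalCStarAlgebra A] (hA : RMeqM A) : QMeqM A := by
  intro m hm
  obtain ⟨l, hl, -⟩ := exists_isApproximateUnit_norm_le_one A
  have hdense := denseRange_mul_of_isApproximateUnit hl
  obtain ⟨L, hL⟩ : ∃ L : A →L[ℂ] A, (ContinuousLinearMap.mul ℂ A).flip ∘L L = m.flip := by
    refine exists_comp_eq_of_denseRange
      (ContinuousLinearMap.isometry_mul_flip ℂ A).isClosedEmbedding hdense fun ⟨y, y'⟩ => ?_
    obtain ⟨Ly, hLy⟩ := hA (m.flip y) (fun a x => hm.map_mul_left hl a x y)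
    exact ⟨Ly y', by ext x; simpa [hm.map_mul_right hl] using (hLy x y').symm⟩
  obtain ⟨R, hR⟩ : ∃ R : A →L[ℂ] A, ContinuousLinearMap.mul ℂ A ∘L R = m := by
    refine exists_comp_eq_of_denseRange
      (ContinuousLinearMap.isometry_mul ℂ A).isClosedEmbedding hdense fun ⟨x', x⟩ => ?_
    obtain ⟨Rx, hRx⟩ := hA.exists_right (m x) (hm.map_mul_right hl x)
    exact ⟨Rx x', by ext y; simpa [hm.map_mul_left hl] using hRx x' y⟩
  have hmL (x y : A) : m x y = x * L y := congr($hL y x).symm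
  have hmR (x y : A) : m x y = R x * y := congr($hR x y).symm
  exact ⟨L, R, fun x y => (hmR x y).symm.trans (hmL x y), hmL⟩

end RightCentralizer

section CompactOperators

variable {𝕜 H σ : Type*} [RCLike 𝕜] [NormedAddCommGroup H] [InnerProductSpace 𝕜 H]
  [CompleteSpace H] [SetLike σ (H →L[𝕜] H)] [NonUnitalSubringClass σ (H →L[𝕜] H)]
  [SMulMemClass σ 𝕜 (H →L[𝕜] H)] {S : σ} {l : Filter S}

open ContinuousLinearMapWOT in
lemma exists_forall_eq_coe_mul (hl : l.IsApproximateUnit) (hl_norm : ∀ᶠ e in l, ‖e‖ ≤ 1)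
    (f : S →L[𝕜] H →L[𝕜] H) (hf : ∀ a x, f (a * x) = a * f x) :
    ∃ T : H →L[𝕜] H, (∀ x, f x = x * T) ∧ ∃ u : Ultrafilter S, u ≤ l ∧
      ∀ ξ, Tendsto (fun e : S => (e : H →L[𝕜] H) (T ξ)) u (𝓝 (T ξ)) := by
  have := hl.neBot
  have hbdd : ∀ᶠ e in l, ‖f e‖ ≤ ‖f‖ := by
    filter_upwards [hl_norm] with e he using by simpa using f.le_opNorm_of_le he
  obtain ⟨T, -, hT⟩ := (isCompact_setOf_norm_toCLM_le ‖f‖).exists_mapClusterPt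
    (u := fun e => ofCLM (f e)) (le_principal_iff.2 hbdd)
  obtain ⟨u, hul, hu⟩ := mapClusterPt_iff_ultrafilter.1 hT
  have hfT (x : S) : f x = x * toCLM T := by
    have hlim_f : Tendsto (fun e => ofCLM (f (x * e))) u (𝓝 (ofCLM (f x))) :=
      ((continuous_ofCLM.comp f.continuous).tendsto x).comp ((hl.tendsto_mul_left x).mono_left hul)
    have hlim_mul : Tendsto (fun e => ofCLM (f (x * e))) u (𝓝 (ofCLM (x : H →L[𝕜] H) * T)) := by
      simpa only [hf, ofCLM_mul] using hu.const_mul (ofCLM (x : H →L[𝕜] H))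
    exact ofCLM_injective (tendsto_nhds_unique hlim_f hlim_mul)
  refine ⟨toCLM T, hfT, u, hul, fun ξ => tendsto_of_tendsto_inner_of_norm_le (𝕜 := 𝕜) ?_ ?_⟩
  · filter_upwards [hl_norm.filter_mono hul] with e he
    simpa using (e : H →L[𝕜] H).le_of_opNorm_le he (toCLM T ξ)
  · simpa [hfT] using tendsto_iff_forall_inner_apply_tendsto.1 hu ξ (T ξ)

lemma exists_forall_mul_eq_mul_of_isCompactOperator (hS : IsClosed (S : Set (H →L[𝕜] H)))
    (hl : l.IsApproximateUnit) (hl_norm : ∀ᶠ e in l, ‖e‖ ≤ 1)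
    (f : S →L[𝕜] S) (hf : ∀ a x, f (a * x) = a * f x) {y : S}
    (hy : IsCompactOperator (y : H →L[𝕜] H)) : ∃ t : S, ∀ x, f x * y = x * t := by
  let incl : S →L[𝕜] H →L[𝕜] H := ⟨SMulMemClass.subtype S, continuous_subtype_val⟩
  obtain ⟨T, hfT, u, hul, hT⟩ := exists_forall_eq_coe_mul hl hl_norm (incl ∘L f)
    fun a x => congrArg Subtype.val (hf a x)
  have hmul (x : S) : ((f x * y : S) : H →L[𝕜] H) = x * (T * y) :=
    congr($(hfT x) * y).trans (mul_assoc ..)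
  have hlim : Tendsto (fun e : S => (e : H →L[𝕜] H) * (T * y)) u (𝓝 (T * y)) :=
    tendsto_comp_of_isCompactOperator (A₀ := 1) (hy.clm_comp T) (hl_norm.filter_mono hul)
      fun ξ => hT (y.1 ξ)
  have hmem : T * y ∈ S := hS.mem_of_tendsto hlim (.of_forall fun e => hmul e ▸ (f e * y).2)
  exact ⟨⟨T * y, hmem⟩, fun x => Subtype.ext (hmul x)⟩

end CompactOperators

/-- If `A` is a closed *-subalgebra of `B(H)` all of whose elements are
compact operators, then `QM(A) = M(A)`. -/
theorem QMeqM_of_subalgebra_of_compact_operators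
    (H : Type*) [NormedAddCommGroup H] [InnerProductSpace ℂ H] [CompleteSpace H]
    (S : NonUnitalStarSubalgebra ℂ (H →L[ℂ] H))
    (hclosed : IsClosed (S : Set (H →L[ℂ] H)))
    (hcompact : ∀ T : H →L[ℂ] H, T ∈ S → IsCompactOperator T) :
    QMeqM ↥S := by
  obtain ⟨l, hl, hl_norm⟩ := exists_isApproximateUnit_norm_le_one S
  have hRM : RMeqM S := fun R hR => by
    choose L hL using fun y : S =>
      exists_forall_mul_eq_mul_of_isCompactOperator hclosed hl hl_norm R hR (hcompact y y.2)
    exact ⟨L, fun x y => hL y x⟩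
  exact hRM.qMeqM
end

section
/- Let H₁ and H₂ be separable infinite-dimensional complex Hilbert spaces, and let A and B be σ-unital closed *-subalgebras of B(H₁) and B(H₂) respectively with K(H₁) ⊆ A and K(H₂) ⊆ B. Define LM(X) = {T ∈ B(H₂,H₁) : T∘b is compact for all b ∈ B} and RM(X) = {T ∈ B(H₂,H₁) : a∘T is compact for all a ∈ A}. Then RM(X) ⊆ LM(X) if and only if either the identity operator on H₁ belongs to A or B = K(H₂). -/
/-!
Let `e` be the σ-unit of `A`. Every element of `A` is a norm limit of operators `a ∘ e`, so `T`
lies in `RM(X)` as soon as `e ∘ T` is compact. If `1 ∉ A`, then `e` is not bounded below on `Kᗮ`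
for any finite-dimensional `K`: otherwise `e⋆ e + P_K ∈ A` would be bounded below by a positive
scalar, and functional calculus inside `A` would produce `1`. Hence there is an orthonormal
sequence `f n` with `‖e (f n)‖ ≤ 2⁻ⁿ`. An isometry `V` of a separable closed subspace `K` of `H₂`
into `H₁` which carries an orthonormal basis into this sequence makes `e ∘ V` compact, so
`V ∘ P_K ∈ RM(X)`. If this operator is also in `LM(X)`, then `P_K ∘ b` is compact for every
`b ∈ B`. As compactness of `b` is tested on sequences, it suffices to know this for all
separable `K`.
-/

/-- A closed *-subalgebra of `B(H)`, given as a set: a norm-closed linear subspace closed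
under composition and Hilbert-space adjoints. -/
structure IsClosedStarSubalgebraOfOperators {H : Type*} [NormedAddCommGroup H]
    [InnerProductSpace ℂ H] [CompleteSpace H] (A : Set (H →L[ℂ] H)) : Prop where
  isClosed : IsClosed A
  zero_mem : (0 : H →L[ℂ] H) ∈ A
  add_mem : ∀ x y : H →L[ℂ] H, x ∈ A → y ∈ A → x + y ∈ A
  smul_mem : ∀ (c : ℂ) (x : H →L[ℂ] H), x ∈ A → c • x ∈ A
  mul_mem : ∀ x y : H →L[ℂ] H, x ∈ A → y ∈ A → x.comp y ∈ A
  star_mem : ∀ x : H →L[ℂ] H, x ∈ A → ContinuousLinearMap.adjoint x ∈ A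

/-- The operator algebra `A` is σ-unital: it contains a positive element `e` such that
`{e ∘ a : a ∈ A}` is dense in `A`. -/
def IsSigmaUnitalOperatorAlgebra {H : Type*} [NormedAddCommGroup H]
    [InnerProductSpace ℂ H] [CompleteSpace H] (A : Set (H →L[ℂ] H)) : Prop :=
  ∃ e ∈ A, e.IsPositive ∧ A ⊆ closure {x : H →L[ℂ] H | ∃ a ∈ A, x = e.comp a}

open TopologicalSpace ContinuousLinearMap
open scoped InnerProductSpace

section CStarAlgebra

variable {R : Type*} [CStarAlgebra R] [PartialOrder R] [StarOrderedRing R]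

lemma one_mem_of_algebraMap_le {A : NonUnitalStarSubalgebra ℂ R} (hA : IsClosed (A : Set R))
    {a : R} (ha : a ∈ A) {c : ℝ} (hc : 0 < c) (hca : algebraMap ℝ R c ≤ a) : 1 ∈ A := by
  have ha_nonneg : 0 ≤ a := (algebraMap_nonneg R hc.le).trans hca
  have hspec : ∀ x ∈ spectrum ℝ a, c ≤ x := (algebraMap_le_iff_le_spectrum).1 hca
  -- `x ↦ min (x / c) 1` vanishes at `0`, so it acts inside `A`, and is `1` on the spectrum of `a`.
  have hone : cfcₙ (fun x : ℝ ↦ min (x / c) 1) a = 1 := by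
    rw [cfcₙ_eq_cfc, ← cfc_const_one ℝ a]
    exact cfc_congr fun x hx ↦ min_eq_right ((one_le_div hc).2 (hspec x hx))
  exact hone ▸ cfcₙ_mem (hs := hA) _ ha

end CStarAlgebra

section InnerProductSpace

variable {𝕜 E F G : Type*} [RCLike 𝕜] [NormedAddCommGroup E] [InnerProductSpace 𝕜 E]
  [NormedAddCommGroup F] [InnerProductSpace 𝕜 F] [NormedAddCommGroup G] [NormedSpace 𝕜 G]

lemma exists_orthonormal_of_forall_finiteDimensional {P : ℕ → E → Prop}
    (h : ∀ n (K : Submodule 𝕜 E), FiniteDimensional 𝕜 K → ∃ x ∈ Kᗮ, ‖x‖ = 1 ∧ P n x) :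
    ∃ f : ℕ → E, Orthonormal 𝕜 f ∧ ∀ n, P n (f n) := by
  -- The index of a term is recovered as the number of preceding terms.
  obtain ⟨f, hf⟩ := Set.seq_of_forall_finite_exists
    (P := fun x t ↦ x ∈ (Submodule.span 𝕜 t)ᗮ ∧ ‖x‖ = 1 ∧ P t.ncard x)
    fun t ht ↦ h t.ncard _ (FiniteDimensional.span_of_finite 𝕜 ht)
  have horth : ∀ {m n}, m < n → ⟪f m, f n⟫_𝕜 = 0 := fun {m n} hmn ↦
    (Submodule.mem_orthogonal _ _).1 (hf n).1 _
      (Submodule.subset_span (Set.mem_image_of_mem f hmn))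
  have hon : Orthonormal 𝕜 f := by
    refine ⟨fun n ↦ (hf n).2.1, fun m n hmn ↦ ?_⟩
    rcases hmn.lt_or_gt with hlt | hgt
    · exact horth hlt
    · exact inner_eq_zero_symm.1 (horth hgt)
  refine ⟨f, hon, fun n ↦ ?_⟩
  have hcard : (f '' Set.Iio n).ncard = n := by
    simp [Set.ncard_image_of_injective _ hon.linearIndependent.injective]
  simpa only [hcard] using (hf n).2.2

lemma countable_of_orthonormal {ι : Type*} [SeparableSpace E] {v : ι → E}
    (hv : Orthonormal 𝕜 v) : Countable ι := by
  refine Pairwise.countable_of_isOpen_disjoint (s := fun i ↦ Metric.ball (v i) (1 / 2))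
    (fun i j hij ↦ Metric.ball_disjoint_ball ?_) (fun _ ↦ Metric.isOpen_ball)
    fun i ↦ ⟨v i, Metric.mem_ball_self (by norm_num)⟩
  have hdist : ‖v i - v j‖ ^ 2 = 2 := by
    rw [@norm_sub_sq 𝕜, hv.2 hij, hv.1 i, hv.1 j]
    norm_num
  rw [dist_eq_norm]
  nlinarith [norm_nonneg (v i - v j)]

lemma isCompactOperator_of_summable_norm_hilbertBasis [CompleteSpace G] {ι : Type*}
    (b : HilbertBasis ι 𝕜 E) {T : E →L[𝕜] G} (hT : Summable fun i ↦ ‖T (b i)‖) :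
    IsCompactOperator T := by
  have hsum : Summable fun i ↦ InnerProductSpace.rankOne 𝕜 (T (b i)) (b i) :=
    .of_norm (by simpa [b.orthonormal.1] using hT)
  have htsum : ∑' i, InnerProductSpace.rankOne 𝕜 (T (b i)) (b i) = T := by
    ext x
    refine ((ContinuousLinearMap.apply 𝕜 G x).hasSum hsum.hasSum).unique ?_
    simpa [b.repr_apply_apply] using T.hasSum (b.hasSum_repr x)
  refine isCompactOperator_of_tendsto (htsum ▸ hsum.hasSum) (.of_forall fun s ↦ ?_)
  refine Submodule.sum_mem (compactOperator (RingHom.id 𝕜) E G) fun i _ ↦ ?_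
  exact (isCompactOperator_of_locallyCompactSpace_dom (innerSL 𝕜 (b i))).clm_comp
    (toSpanSingleton 𝕜 (T (b i)))

lemma isCompactOperator_starProjection (K : Submodule 𝕜 E) [FiniteDimensional 𝕜 K] :
    IsCompactOperator K.starProjection :=
  (isCompactOperator_of_locallyCompactSpace_dom K.orthogonalProjectionOnto).clm_comp K.subtypeL

lemma isCompactOperator_linearIsometry_comp_iff [CompleteSpace E] [CompleteSpace F]
    (V : E →ₗᵢ[𝕜] F) {T : G →L[𝕜] E} :
    IsCompactOperator (V.toContinuousLinearMap ∘L T) ↔ IsCompactOperator T := by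
  refine ⟨fun h ↦ ?_, fun h ↦ h.clm_comp V.toContinuousLinearMap⟩
  have hVV : adjoint V.toContinuousLinearMap ∘L V.toContinuousLinearMap = 1 :=
    (norm_map_iff_adjoint_comp_self _).1 V.norm_map
  have hT : adjoint V.toContinuousLinearMap ∘L (V.toContinuousLinearMap ∘L T) = T := by
    rw [← comp_assoc, hVV, one_def, id_comp]
  exact hT ▸ h.clm_comp (adjoint V.toContinuousLinearMap)

lemma isCompactOperator_of_forall_separable_starProjection [CompleteSpace E] {T : G →L[𝕜] E}
    (h : ∀ (K : Submodule 𝕜 E) [CompleteSpace K] [SeparableSpace K],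
      IsCompactOperator (K.starProjection ∘L T)) :
    IsCompactOperator T := by
  refine (isCompactOperator_iff_isCompact_closure_image_ball (T : G →ₗ[𝕜] E) one_pos).2 ?_
  refine IsSeqCompact.isCompact fun y hy ↦ ?_
  let K : Submodule 𝕜 E := (Submodule.span 𝕜 (Set.range y)).topologicalClosure
  have : SeparableSpace K := (Set.countable_range y).isSeparable.span.closure.separableSpace
  have : CompleteSpace K := (Submodule.isClosed_topologicalClosure _).completeSpace_coe
  have hyK : ∀ n, K.starProjection (y n) = y n := fun n ↦
    K.starProjection_eq_self_iff.2
      (Submodule.le_topologicalClosure _ (Submodule.subset_span ⟨n, rfl⟩))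
  have hcomp : IsCompact (closure ((K.starProjection ∘L T) '' Metric.ball 0 1)) :=
    (h K).isCompact_closure_image_ball (f := (K.starProjection ∘L T : G →ₗ[𝕜] E)) 1
  have hmem : ∀ n, y n ∈ closure ((K.starProjection ∘L T) '' Metric.ball 0 1) := fun n ↦ by
    rw [← hyK n, coe_comp, Set.image_comp]
    exact map_mem_closure K.starProjection.continuous (hy n) (Set.mapsTo_image _ _)
  obtain ⟨z, -, φ, hφ, hlim⟩ := hcomp.isSeqCompact hmem
  exact ⟨z, isClosed_closure.mem_of_tendsto hlim (.of_forall fun n ↦ hy (φ n)), φ, hφ, hlim⟩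

lemma exists_linearIsometry_isCompactOperator_comp [CompleteSpace E] [SeparableSpace E]
    [CompleteSpace F] [CompleteSpace G] {e : F →L[𝕜] G} {f : ℕ → F} (hf : Orthonormal 𝕜 f)
    (hsum : Summable fun n ↦ ‖e (f n)‖) :
    ∃ V : E →ₗᵢ[𝕜] F, IsCompactOperator (e ∘L V.toContinuousLinearMap) := by
  obtain ⟨w, b, -⟩ := exists_hilbertBasis 𝕜 E
  have : Countable w := countable_of_orthonormal b.orthonormal
  obtain ⟨k, hk⟩ := exists_injective_nat w
  let V : E →ₗᵢ[𝕜] F :=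
    (hf.comp k hk).orthogonalFamily.linearIsometry.comp b.repr.toLinearIsometry
  have hVb : ∀ i, V (b i) = f (k i) := fun i ↦ by
    classical
    simp [V, b.repr_self]
  refine ⟨V, isCompactOperator_of_summable_norm_hilbertBasis b ?_⟩
  simpa [hVb] using! hsum.comp_injective hk

lemma exists_pos_mul_sq_norm_le_of_forall_mem_orthogonal_le
    {e : E →L[𝕜] G} {K : Submodule 𝕜 E} [K.HasOrthogonalProjection] {ε : ℝ} (hε : 0 < ε)
    (he : ∀ x ∈ Kᗮ, ε * ‖x‖ ≤ ‖e x‖) :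
    ∃ c > 0, ∀ x, c * ‖x‖ ^ 2 ≤ ‖e x‖ ^ 2 + ‖K.starProjection x‖ ^ 2 := by
  set M : ℝ := ε + ‖e‖ with hM
  have hlin (x : E) : ε * ‖x‖ ≤ ‖e x‖ + M * ‖K.starProjection x‖ := by
    let p := K.starProjection x
    calc ε * ‖x‖ ≤ ε * (‖x - p‖ + ‖p‖) := by gcongr; exact norm_le_norm_sub_add x p
      _ ≤ ‖e (x - p)‖ + ε * ‖p‖ := by
        rw [mul_add]
        gcongr
        exact he _ (K.sub_starProjection_mem_orthogonal x)
      _ ≤ ‖e x‖ + ‖e‖ * ‖p‖ + ε * ‖p‖ := by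
        rw [map_sub]
        gcongr
        exact (norm_sub_le _ _).trans (by gcongr; exact e.le_opNorm p)
      _ = ‖e x‖ + M * ‖p‖ := by rw [hM]; ring
  refine ⟨ε ^ 2 / (1 + M ^ 2), by positivity, fun x ↦ ?_⟩
  rw [div_mul_eq_mul_div, div_le_iff₀ (by positivity)]
  calc ε ^ 2 * ‖x‖ ^ 2 = (ε * ‖x‖) ^ 2 := by ring
    _ ≤ (‖e x‖ + M * ‖K.starProjection x‖) ^ 2 := by gcongr; exact hlin x
    _ ≤ (‖e x‖ ^ 2 + ‖K.starProjection x‖ ^ 2) * (1 + M ^ 2) := by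
      linarith [sq_nonneg (M * ‖e x‖ - ‖K.starProjection x‖)]

end InnerProductSpace

lemma algebraMap_le_iff_forall_mul_sq_norm_le {H : Type*} [NormedAddCommGroup H]
    [InnerProductSpace ℂ H] [CompleteSpace H] {T : H →L[ℂ] H}
    (hT : IsSelfAdjoint T) {c : ℝ} :
    algebraMap ℝ (H →L[ℂ] H) c ≤ T ↔ ∀ x, c * ‖x‖ ^ 2 ≤ T.reApplyInnerSelf x := by
  have hc : IsSelfAdjoint (algebraMap ℝ (H →L[ℂ] H) c) := .algebraMap _ (.all c)
  rw [ContinuousLinearMap.le_def, isPositive_def', and_iff_right (hT.sub hc)]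
  refine forall_congr' fun x ↦ ?_
  rw [reApplyInnerSelf_apply, reApplyInnerSelf_apply]
  simp [Algebra.algebraMap_eq_smul_one, inner_sub_left, inner_smul_left_eq_smul,
    ← Complex.ofReal_pow]

namespace IsClosedStarSubalgebraOfOperators

variable {H E : Type*} [NormedAddCommGroup H] [InnerProductSpace ℂ H] [CompleteSpace H]
  [NormedAddCommGroup E] [NormedSpace ℂ E] {A : Set (H →L[ℂ] H)}

/-- A closed *-subalgebra of `B(H)` as a bundled non-unital star subalgebra, which gives access to
the continuous functional calculus inside `A`. -/
def toNonUnitalStarSubalgebra (hA : IsClosedStarSubalgebraOfOperators A) :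
    NonUnitalStarSubalgebra ℂ (H →L[ℂ] H) where
  carrier := A
  zero_mem' := hA.zero_mem
  add_mem' := hA.add_mem _ _
  smul_mem' := hA.smul_mem
  mul_mem' := hA.mul_mem _ _
  star_mem' := hA.star_mem _

lemma id_mem_of_forall_mem_orthogonal_le (hA : IsClosedStarSubalgebraOfOperators A)
    {K : Submodule ℂ H} [K.HasOrthogonalProjection] (hK : K.starProjection ∈ A)
    {e : H →L[ℂ] H} (he : e ∈ A) {ε : ℝ} (hε : 0 < ε) (hbound : ∀ x ∈ Kᗮ, ε * ‖x‖ ≤ ‖e x‖) :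
    ContinuousLinearMap.id ℂ H ∈ A := by
  obtain ⟨c, hc, hle⟩ := exists_pos_mul_sq_norm_le_of_forall_mem_orthogonal_le hε hbound
  have hS : adjoint e ∘L e + K.starProjection ∈ A :=
    hA.add_mem _ _ (hA.mul_mem _ _ (hA.star_mem _ he) he) hK
  have hSsa : IsSelfAdjoint (adjoint e ∘L e + K.starProjection) :=
    (IsSelfAdjoint.star_mul_self e).add (isSelfAdjoint_starProjection K)
  refine one_mem_of_algebraMap_le (A := hA.toNonUnitalStarSubalgebra) hA.isClosed hS hc ?_
  refine (algebraMap_le_iff_forall_mul_sq_norm_le hSsa).2 fun x ↦ (hle x).trans_eq ?_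
  rw [reApplyInnerSelf_apply, add_apply, inner_add_left, map_add,
    apply_norm_sq_eq_inner_adjoint_left, K.re_inner_starProjection_eq_normSq]
  rfl

lemma exists_mem_orthogonal_norm_apply_le (hA : IsClosedStarSubalgebraOfOperators A)
    (hid : ContinuousLinearMap.id ℂ H ∉ A)
    {K : Submodule ℂ H} [K.HasOrthogonalProjection] (hK : K.starProjection ∈ A)
    {e : H →L[ℂ] H} (he : e ∈ A) {ε : ℝ} (hε : 0 < ε) :
    ∃ x ∈ Kᗮ, ‖x‖ = 1 ∧ ‖e x‖ ≤ ε := by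
  contrapose! hid
  refine hA.id_mem_of_forall_mem_orthogonal_le hK he hε fun x hx ↦ ?_
  rcases eq_or_ne x 0 with rfl | hx0
  · simp
  have hlt := hid ((‖x‖⁻¹ : ℂ) • x) (Kᗮ.smul_mem _ hx) (norm_smul_inv_norm hx0)
  rw [map_smul, norm_smul, norm_inv, Complex.norm_real, norm_norm,
    lt_inv_mul_iff₀ (norm_pos_iff.2 hx0)] at hlt
  linarith

lemma exists_orthonormal_summable_norm_apply (hA : IsClosedStarSubalgebraOfOperators A)
    (hKA : ∀ T : H →L[ℂ] H, IsCompactOperator T → T ∈ A)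
    (hid : ContinuousLinearMap.id ℂ H ∉ A) {e : H →L[ℂ] H} (he : e ∈ A) :
    ∃ f : ℕ → H, Orthonormal ℂ f ∧ Summable fun n ↦ ‖e (f n)‖ := by
  obtain ⟨f, hf, hle⟩ := exists_orthonormal_of_forall_finiteDimensional (𝕜 := ℂ)
    (P := fun n x ↦ ‖e x‖ ≤ (1 / 2 : ℝ) ^ n) fun n K _ ↦
      hA.exists_mem_orthogonal_norm_apply_le hid (hKA _ (isCompactOperator_starProjection K)) he
        (by positivity)
  exact ⟨f, hf, .of_nonneg_of_le (fun _ ↦ norm_nonneg _) hle summable_geometric_two⟩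

lemma isCompactOperator_comp_of_subset_closure (hA : IsClosedStarSubalgebraOfOperators A)
    {e : H →L[ℂ] H} (he : IsSelfAdjoint e)
    (hdense : A ⊆ closure {x : H →L[ℂ] H | ∃ a ∈ A, x = e.comp a})
    {T : E →L[ℂ] H} (hT : IsCompactOperator (e ∘L T)) {a : H →L[ℂ] H} (ha : a ∈ A) :
    IsCompactOperator (a ∘L T) := by
  have hclosed : IsClosed {x : H →L[ℂ] H | IsCompactOperator (adjoint x ∘L T)} :=
    isClosed_setOfPred_isCompactOperator.preimage
      (f := fun x : H →L[ℂ] H ↦ adjoint x ∘L T) (by fun_prop)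
  have hgen : {x : H →L[ℂ] H | ∃ a ∈ A, x = e.comp a} ⊆
      {x : H →L[ℂ] H | IsCompactOperator (adjoint x ∘L T)} := by
    rintro _ ⟨a', -, rfl⟩
    rw [Set.mem_ofPred_eq, adjoint_comp, he.adjoint_eq, comp_assoc]
    exact hT.clm_comp (adjoint a')
  simpa using closure_minimal hgen hclosed (hdense (hA.star_mem a ha))

end IsClosedStarSubalgebraOfOperators

theorem RM_subset_LM_iff_general
    {H₁ H₂ : Type*} [NormedAddCommGroup H₁] [InnerProductSpace ℂ H₁] [CompleteSpace H₁]
    [NormedAddCommGroup H₂] [InnerProductSpace ℂ H₂] [CompleteSpace H₂]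
    {A : Set (H₁ →L[ℂ] H₁)} {B : Set (H₂ →L[ℂ] H₂)}
    (hA : IsClosedStarSubalgebraOfOperators A)
    (hKA : ∀ T : H₁ →L[ℂ] H₁, IsCompactOperator T → T ∈ A)
    (hAσ : IsSigmaUnitalOperatorAlgebra A) :
    {T : H₂ →L[ℂ] H₁ | ∀ a ∈ A, IsCompactOperator (a.comp T)} ⊆
        {T : H₂ →L[ℂ] H₁ | ∀ b ∈ B, IsCompactOperator (T.comp b)} ↔
      (ContinuousLinearMap.id ℂ H₁ ∈ A ∨
        B ⊆ {T : H₂ →L[ℂ] H₂ | IsCompactOperator T}) := by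
  constructor
  · refine fun hsub ↦ or_iff_not_imp_left.2 fun hid b hb ↦ ?_
    obtain ⟨e, he, hpos, hdense⟩ := hAσ
    obtain ⟨f, hf, hsum⟩ := hA.exists_orthonormal_summable_norm_apply hKA hid he
    refine isCompactOperator_of_forall_separable_starProjection fun K _ _ ↦ ?_
    obtain ⟨V, hV⟩ := exists_linearIsometry_isCompactOperator_comp (E := K) hf hsum
    let T : H₂ →L[ℂ] H₁ := V.toContinuousLinearMap ∘L K.orthogonalProjectionOnto
    have heT : IsCompactOperator (e ∘L T) := hV.comp_clm K.orthogonalProjectionOnto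
    have hTb : IsCompactOperator (T ∘L b) := hsub
      (fun a ha ↦ hA.isCompactOperator_comp_of_subset_closure hpos.isSelfAdjoint hdense heT ha) b hb
    have hPb : IsCompactOperator (K.orthogonalProjectionOnto ∘L b) :=
      (isCompactOperator_linearIsometry_comp_iff V).1 hTb
    exact hPb.clm_comp K.subtypeL
  · rintro (hid | hB) T hT b hb
    · exact IsCompactOperator.comp_clm (hT _ hid) b
    · exact IsCompactOperator.clm_comp (hB hb) T

/-- With `LM(X) = {T : T ∘ b compact ∀ b ∈ B}` and
`RM(X) = {T : a ∘ T compact ∀ a ∈ A}`, one has `RM(X) ⊆ LM(X)` iff `1 ∈ A` or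
`B = K(H₂)`. -/
theorem RM_subset_LM_iff
    {H₁ H₂ : Type*} [NormedAddCommGroup H₁] [InnerProductSpace ℂ H₁] [CompleteSpace H₁]
    [NormedAddCommGroup H₂] [InnerProductSpace ℂ H₂] [CompleteSpace H₂]
    [TopologicalSpace.SeparableSpace H₁] [TopologicalSpace.SeparableSpace H₂]
    (hH₁ : ¬ FiniteDimensional ℂ H₁) (hH₂ : ¬ FiniteDimensional ℂ H₂)
    {A : Set (H₁ →L[ℂ] H₁)} {B : Set (H₂ →L[ℂ] H₂)}
    (hA : IsClosedStarSubalgebraOfOperators A) (hB : IsClosedStarSubalgebraOfOperators B)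
    (hKA : ∀ T : H₁ →L[ℂ] H₁, IsCompactOperator T → T ∈ A)
    (hKB : ∀ T : H₂ →L[ℂ] H₂, IsCompactOperator T → T ∈ B)
    (hAσ : IsSigmaUnitalOperatorAlgebra A) (hBσ : IsSigmaUnitalOperatorAlgebra B) :
    {T : H₂ →L[ℂ] H₁ | ∀ a ∈ A, IsCompactOperator (a.comp T)} ⊆
        {T : H₂ →L[ℂ] H₁ | ∀ b ∈ B, IsCompactOperator (T.comp b)} ↔
      (ContinuousLinearMap.id ℂ H₁ ∈ A ∨
        B = {T : H₂ →L[ℂ] H₂ | IsCompactOperator T}) := by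
  exact (RM_subset_LM_iff_general hA hKA hAσ).trans
    (or_congr_right ⟨fun hB ↦ hB.antisymm hKB, Eq.subset⟩)
end

section
/- Let H₁ and H₂ be separable infinite-dimensional complex Hilbert spaces, and let A and B be σ-unital closed *-subalgebras of B(H₁) and B(H₂) respectively with K(H₁) ⊆ A and K(H₂) ⊆ B. Define LM(X) = {T ∈ B(H₂,H₁) : T∘b is compact for all b ∈ B}, RM(X) = {T ∈ B(H₂,H₁) : a∘T is compact for all a ∈ A}, M(X) = LM(X) ∩ RM(X), and QM(X) = {T ∈ B(H₂,H₁) : a∘T∘b is compact for all a ∈ A, b ∈ B}. Then QM(X) = M(X) if and only if either (the identity operator on H₁ belongs to A and the identity operator on H₂ belongs to B) or (A = K(H₁) and B = K(H₂)). -/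
open ContinuousLinearMap Filter InnerProductSpace Topology

theorem one_mem_of_isUnit_of_subset_closure {M : Type*} [Monoid M] [TopologicalSpace M]
    [ContinuousMul M] {A : Set M} (hA : IsClosed A) {e : M} (heA : e ∈ A) (he : IsUnit e)
    (hAe : A ⊆ closure {x | ∃ a ∈ A, x = e * a}) : 1 ∈ A := by
  obtain ⟨u, rfl⟩ := he
  have h := map_mem_closure (continuous_const_mul (↑u⁻¹ : M)) (hAe heA) (t := A) <| by
    rintro _ ⟨a, ha, rfl⟩
    simpa using ha
  rwa [hA.closure_eq, u.inv_mul] at h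

section InnerProductSpace

variable {𝕜 E F G : Type*} [RCLike 𝕜]
  [NormedAddCommGroup E] [InnerProductSpace 𝕜 E]
  [NormedAddCommGroup F] [InnerProductSpace 𝕜 F]
  [NormedAddCommGroup G] [InnerProductSpace 𝕜 G]

theorem tendsto_inner_orthonormal_cofinite {ι : Type*} {v : ι → E} (hv : Orthonormal 𝕜 v) (x : E) :
    Tendsto (fun i => inner 𝕜 (v i) x) cofinite (𝓝 0) := by
  have h := (hv.inner_products_summable x).tendsto_cofinite_zero
  rw [tendsto_zero_iff_norm_tendsto_zero]
  simpa using h.sqrt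

theorem tendsto_inner_orthonormal_of_isCompactOperator {ι : Type*} {T : E →L[𝕜] F}
    (hT : IsCompactOperator T) {v : ι → F} (hv : Orthonormal 𝕜 v) {y : ι → E} {C : ℝ}
    (hy : ∀ i, ‖y i‖ ≤ C) : Tendsto (fun i => inner 𝕜 (v i) (T (y i))) cofinite (𝓝 0) := by
  rw [tendsto_iff_ultrafilter]
  intro g hg
  obtain ⟨K, hK, hTK⟩ := hT.image_closedBall_subset_compact (f := (T : E →ₗ[𝕜] F)) C
  have hyK (i : ι) : T (y i) ∈ K := hTK (Set.mem_image_of_mem T (by simpa using hy i))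
  obtain ⟨z, -, hz⟩ := hK.ultrafilter_le_nhds' (g.map fun i => T (y i))
    (Ultrafilter.mem_map.2 (univ_mem' hyK))
  have hTy : Tendsto (fun i => T (y i) - z) g (𝓝 0) := tendsto_sub_nhds_zero_iff.2 hz
  have hdiff : Tendsto (fun i => inner 𝕜 (v i) (T (y i) - z)) g (𝓝 0) :=
    squeeze_zero_norm (fun i => by simpa [hv.1 i] using norm_inner_le_norm (𝕜 := 𝕜) (v i) _)
      (tendsto_zero_iff_norm_tendsto_zero.1 hTy)
  simpa [inner_sub_right] using
    hdiff.add ((tendsto_inner_orthonormal_cofinite hv z).mono_left hg)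

theorem exists_orthonormal_forall_of_forall_exists_mem_orthogonal {P : ℕ → E → Prop}
    (h : ∀ (n : ℕ) (K : Submodule 𝕜 E) [FiniteDimensional 𝕜 K], ∃ x ∈ Kᗮ, ‖x‖ = 1 ∧ P n x) :
    ∃ v : ℕ → E, Orthonormal 𝕜 v ∧ ∀ n, P n (v n) := by
  classical
  choose f hf_orth hf_norm hf using
    fun (n : ℕ) (s : Finset E) => h n (Submodule.span 𝕜 (s : Set E))
  let s : ℕ → Finset E := fun n => n.rec ∅ fun k t => insert (f k t) t
  have hs : Monotone s := monotone_nat_of_le_succ fun n => Finset.subset_insert _ _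
  have hmem : ∀ {m n}, m < n → f m (s m) ∈ s n := fun hmn =>
    hs (Nat.succ_le_of_lt hmn) (Finset.mem_insert_self _ _)
  have horth : ∀ {m n}, m < n → inner 𝕜 (f m (s m)) (f n (s n)) = 0 := fun hmn =>
    (Submodule.mem_orthogonal _ _).1 (hf_orth _ _) _ (Submodule.subset_span (hmem hmn))
  refine ⟨fun n => f n (s n), ⟨fun n => hf_norm _ _, fun m n hmn => ?_⟩, fun n => hf _ _⟩
  rcases hmn.lt_or_gt with hlt | hgt
  · exact horth hlt
  · exact inner_eq_zero_symm.1 (horth hgt)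

theorem mul_norm_le_norm_of_forall_norm_eq_one {T : E →L[𝕜] F} {K : Submodule 𝕜 E} {ε : ℝ}
    (h : ∀ x ∈ K, ‖x‖ = 1 → ε ≤ ‖T x‖) {x : E} (hx : x ∈ K) : ε * ‖x‖ ≤ ‖T x‖ := by
  rcases eq_or_ne x 0 with rfl | hx0
  · simp
  have hpos : 0 < ‖x‖ := norm_pos_iff.2 hx0
  have h1 := h _ (K.smul_mem ((‖x‖ : 𝕜)⁻¹) hx) (norm_smul_inv_norm hx0)
  rwa [map_smul, norm_smul, norm_inv, RCLike.norm_ofReal, abs_norm, inv_mul_eq_div,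
    le_div_iff₀ hpos] at h1

theorem isCompactOperator_rankOne (x : E) (y : F) : IsCompactOperator (rankOne 𝕜 x y) :=
  (isCompactOperator_of_locallyCompactSpace_rng (toSpanSingleton 𝕜 x)).comp_clm (innerSL 𝕜 y)

theorem isCompactOperator_comp_starProjection (T : E →L[𝕜] F) (K : Submodule 𝕜 E)
    [FiniteDimensional 𝕜 K] : IsCompactOperator (T.comp K.starProjection) := by
  have := FiniteDimensional.proper_rclike 𝕜 K
  exact (isCompactOperator_of_locallyCompactSpace_rng (T.comp K.subtypeL)).comp_clm
    K.orthogonalProjectionOnto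

theorem exists_orthonormal_forall_le_norm_of_not_isCompactOperator [CompleteSpace F] {T : E →L[𝕜] F}
    (hT : ¬ IsCompactOperator T) :
    ∃ ε > 0, ∃ u : ℕ → E, Orthonormal 𝕜 u ∧ ∀ n, ε ≤ ‖T (u n)‖ := by
  by_contra! hsmall
  refine hT (isClosed_setOfPred_isCompactOperator.closure_subset (a := T) ?_)
  refine Metric.mem_closure_iff.2 fun ε hε => ?_
  obtain ⟨K, hKfin, hK⟩ : ∃ K : Submodule 𝕜 E, FiniteDimensional 𝕜 K ∧
      ∀ x ∈ Kᗮ, ‖x‖ = 1 → ‖T x‖ ≤ ε / 2 := by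
    by_contra! hlarge
    obtain ⟨u, hu, hTu⟩ := exists_orthonormal_forall_of_forall_exists_mem_orthogonal
      (P := fun _ x => ε / 2 < ‖T x‖) fun _ K hK => hlarge K hK
    obtain ⟨n, hn⟩ := hsmall (ε / 2) (half_pos hε) u hu
    exact (hTu n).not_gt hn
  refine ⟨T.comp K.starProjection, isCompactOperator_comp_starProjection T K, ?_⟩
  rw [dist_eq_norm]
  have hKnorm : ‖T.comp Kᗮ.subtypeL‖ ≤ ε / 2 :=
    opNorm_le_of_unit_norm (half_pos hε).le fun x hx => hK x x.2 hx
  have hdecomp : T - T.comp K.starProjection =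
      (T.comp Kᗮ.subtypeL).comp Kᗮ.orthogonalProjectionOnto := by
    ext x
    simp [Submodule.starProjection_orthogonal_val]
  calc ‖T - T.comp K.starProjection‖
    _ ≤ ‖T.comp Kᗮ.subtypeL‖ * ‖Kᗮ.orthogonalProjectionOnto‖ := hdecomp ▸ opNorm_comp_le _ _
    _ ≤ ε / 2 * 1 := by gcongr; exact Kᗮ.orthogonalProjectionOnto_norm_le
    _ < ε := by linarith

theorem isClosed_range_of_forall_mem_orthogonal_le [CompleteSpace E] {T : E →L[𝕜] F}
    {K : Submodule 𝕜 E} [FiniteDimensional 𝕜 K] {ε : ℝ} (hε : 0 < ε)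
    (hT : ∀ x ∈ Kᗮ, ε * ‖x‖ ≤ ‖T x‖) : IsClosed (Set.range T) := by
  have hanti : AntilipschitzWith (Real.toNNReal ε⁻¹) (T.comp Kᗮ.subtypeL) := by
    refine AddMonoidHomClass.antilipschitz_of_bound _ fun x => ?_
    rw [Real.coe_toNNReal _ (inv_nonneg.2 hε.le), inv_mul_eq_div, le_div_iff₀ hε, mul_comm]
    exact hT x x.2
  have hclosed : IsClosed ((T.comp Kᗮ.subtypeL).range : Set F) :=
    hanti.isClosed_range (T.comp Kᗮ.subtypeL).uniformContinuous
  have hrange : T.range = (T.comp Kᗮ.subtypeL).range ⊔ K.map (T : E →ₗ[𝕜] F) := by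
    refine le_antisymm ?_ (sup_le ?_ LinearMap.map_le_range)
    · rintro _ ⟨x, rfl⟩
      obtain ⟨y, hy, z, hz, rfl⟩ := K.exists_add_mem_mem_orthogonal x
      rw [map_add]
      exact add_mem (Submodule.mem_sup_right ⟨y, hy, rfl⟩) (Submodule.mem_sup_left ⟨⟨z, hz⟩, rfl⟩)
    · rintro _ ⟨x, rfl⟩
      exact ⟨x, rfl⟩
  have := Submodule.isClosed_sup_finiteDimensional _ (K.map (T : E →ₗ[𝕜] F)) hclosed
  rwa [← hrange] at this

theorem exists_orthonormal_summable_norm_of_not_surjective [CompleteSpace E] {T : E →L[𝕜] F}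
    (hT : DenseRange T) (hT' : ¬ Function.Surjective T) :
    ∃ η : ℕ → E, Orthonormal 𝕜 η ∧ Summable fun n => ‖T (η n)‖ := by
  obtain ⟨η, hη, hTη⟩ := exists_orthonormal_forall_of_forall_exists_mem_orthogonal
    (P := fun n x => ‖T x‖ ≤ (1 / 2 : ℝ) ^ n) fun n K _ => by
      by_contra! hlarge
      have hclosed : IsClosed (Set.range T) :=
        isClosed_range_of_forall_mem_orthogonal_le (ε := (1 / 2 : ℝ) ^ n) (by positivity)
          fun x => mul_norm_le_norm_of_forall_norm_eq_one fun x hx hx1 => (hlarge x hx hx1).le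
      exact hT' (Set.range_eq_univ.1 (hclosed.closure_eq ▸ hT.closure_range))
  exact ⟨η, hη, .of_nonneg_of_le (fun _ => norm_nonneg _) hTη summable_geometric_two⟩

theorem denseRange_of_subset_closure_comp {A : Set (E →L[𝕜] E)}
    (hK : ∀ T : E →L[𝕜] E, IsCompactOperator T → T ∈ A) {e : E →L[𝕜] E}
    (hAe : A ⊆ closure {x | ∃ a ∈ A, x = e.comp a}) : DenseRange e := by
  intro x
  have h := map_mem_closure (ContinuousLinearMap.apply 𝕜 E (((‖x‖ : 𝕜) ^ 2)⁻¹ • x)).continuous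
    (hAe (hK _ (isCompactOperator_rankOne x x))) (t := Set.range e) <| by
      rintro _ ⟨a, -, rfl⟩
      exact ⟨a _, rfl⟩
  rcases eq_or_ne x 0 with rfl | hx
  · exact subset_closure ⟨0, map_zero e⟩
  · simpa [inner_smul_right, inner_self_eq_norm_sq_to_K, hx] using h

theorem isUnit_of_isSelfAdjoint_of_surjective [CompleteSpace E] {e : E →L[𝕜] E}
    (he : IsSelfAdjoint e) (hsurj : Function.Surjective e) : IsUnit e := by
  have hker : e.ker = ⊥ := by
    rw [← he.adjoint_eq, ← orthogonal_range, LinearMap.range_eq_top.2 hsurj,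
      Submodule.top_orthogonal_eq_bot]
  exact isUnit_iff_bijective.2 ⟨LinearMap.ker_eq_bot.1 hker, hsurj⟩

theorem isCompactOperator_comp_of_adjoint_mem_closure [CompleteSpace F] {e a : F →L[𝕜] F}
    {A : Set (F →L[𝕜] F)} (ha : adjoint a ∈ closure {x | ∃ c ∈ A, x = e.comp c}) {T : E →L[𝕜] F}
    (hT : IsCompactOperator ((adjoint e).comp T)) : IsCompactOperator (a.comp T) := by
  have hcont : Continuous fun S : F →L[𝕜] F => (adjoint S).comp T := by fun_prop
  have h := map_mem_closure hcont ha (t := {S : E →L[𝕜] F | IsCompactOperator S}) <| by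
    rintro _ ⟨c, -, rfl⟩
    simp only [Set.mem_ofPred_eq, adjoint_comp, comp_assoc]
    exact hT.clm_comp (adjoint c)
  rw [isClosed_setOfPred_isCompactOperator.closure_eq] at h
  simpa using h

theorem not_isCompactOperator_comp_of_le_norm_adjoint [CompleteSpace E] [CompleteSpace G]
    {ι : Type*} [Infinite ι] {S : G →L[𝕜] E} {T : E →L[𝕜] F} {u : ι → E} {v : ι → F}
    (hu : ∀ i, ‖u i‖ = 1) (hv : Orthonormal 𝕜 v)
    (hT : ∀ i x, inner 𝕜 (v i) (T x) = inner 𝕜 (u i) x) {ε : ℝ} (hε : 0 < ε)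
    (hS : ∀ i, ε ≤ ‖adjoint S (u i)‖) : ¬ IsCompactOperator (T.comp S) := by
  intro hTS
  have hbdd (i : ι) : ‖adjoint S (u i)‖ ≤ ‖adjoint S‖ := (adjoint S).unit_le_opNorm _ (hu i).le
  have h := (tendsto_inner_orthonormal_of_isCompactOperator hTS hv hbdd).norm
  have hinner (i : ι) : ‖inner 𝕜 (v i) (T.comp S (adjoint S (u i)))‖ = ‖adjoint S (u i)‖ ^ 2 := by
    rw [comp_apply, hT, ← adjoint_inner_left, inner_self_eq_norm_sq_to_K]
    simp
  simp only [hinner, norm_zero] at h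
  exact (pow_pos hε 2).not_ge <| ge_of_tendsto h <| .of_forall fun i =>
    pow_le_pow_left₀ hε.le (hS i) 2

section Complete

variable [CompleteSpace E] [CompleteSpace F] [CompleteSpace G]

theorem isCompactOperator_adjoint {T : E →L[𝕜] F} (hT : IsCompactOperator T) :
    IsCompactOperator (adjoint T) := by
  by_contra hT'
  obtain ⟨ε, hε, u, hu, hTu⟩ := exists_orthonormal_forall_le_norm_of_not_isCompactOperator hT'
  exact not_isCompactOperator_comp_of_le_norm_adjoint (T := .id 𝕜 F) hu.1 hu (fun _ _ => rfl)
    hε hTu hT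

theorem isCompactOperator_adjoint_iff {T : E →L[𝕜] F} :
    IsCompactOperator (adjoint T) ↔ IsCompactOperator T :=
  ⟨fun h => by simpa using isCompactOperator_adjoint h, isCompactOperator_adjoint⟩

/-- The partial isometry sending each `u i` to `v i` and vanishing on the orthogonal complement of
`u`, encoded as a composition through `ℓ²(ι)`. -/
noncomputable def orthonormalTransfer {ι : Type*} {u : ι → E} {v : ι → F} (hu : Orthonormal 𝕜 u)
    (hv : Orthonormal 𝕜 v) : E →L[𝕜] F :=
  hv.orthogonalFamily.linearIsometry.toContinuousLinearMap.comp
    (adjoint hu.orthogonalFamily.linearIsometry.toContinuousLinearMap)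

section Transfer

variable {ι : Type*} {u : ι → E} {v : ι → F} (hu : Orthonormal 𝕜 u) (hv : Orthonormal 𝕜 v)

theorem hasSum_orthonormalTransfer (x : E) :
    HasSum (fun i => inner 𝕜 (u i) x • v i) (orthonormalTransfer hu hv x) := by
  classical
  let U := hu.orthogonalFamily.linearIsometry.toContinuousLinearMap
  have hcoord (i : ι) : adjoint U x i = inner 𝕜 (u i) x := by
    have h := lp.inner_single_left (𝕜 := 𝕜) (G := fun _ : ι => 𝕜) i 1 (adjoint U x)
    rw [adjoint_inner_right] at h
    simpa [U] using h.symm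
  have h := hv.orthogonalFamily.hasSum_linearIsometry (adjoint U x)
  simp only [hcoord, LinearIsometry.toSpanSingleton_apply] at h
  exact h

theorem inner_orthonormalTransfer (i : ι) (x : E) :
    inner 𝕜 (v i) (orthonormalTransfer hu hv x) = inner 𝕜 (u i) x := by
  have h := (hasSum_orthonormalTransfer hu hv x).mapL (innerSL 𝕜 (v i))
  have hi := hasSum_single (f := fun j => innerSL 𝕜 (v i) (inner 𝕜 (u j) x • v j)) i fun j hj => by
    simp [hv.2 hj.symm]
  simpa [inner_smul_right, inner_self_eq_norm_sq_to_K, hv.1] using h.unique hi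

theorem isCompactOperator_comp_orthonormalTransfer {S : F →L[𝕜] G}
    (hS : Summable fun i => ‖S (v i)‖) :
    IsCompactOperator (S.comp (orthonormalTransfer hu hv)) := by
  have hsum : Summable fun i => rankOne 𝕜 (S (v i)) (u i) :=
    .of_norm (by simpa [hu.1] using hS)
  have heq : ∑' i, rankOne 𝕜 (S (v i)) (u i) = S.comp (orthonormalTransfer hu hv) := by
    ext x
    have hx := hsum.hasSum.mapL (ContinuousLinearMap.apply 𝕜 G x)
    exact hx.unique (by simpa using (hasSum_orthonormalTransfer hu hv x).mapL S)
  rw [← heq]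
  exact isClosed_setOfPred_isCompactOperator.mem_of_tendsto hsum.hasSum <| .of_forall fun s =>
    (compactOperator (RingHom.id 𝕜) E G).sum_mem fun i _ => isCompactOperator_rankOne _ _

end Transfer

theorem exists_comp_isCompactOperator_and_not_isCompactOperator_comp {A : Set (F →L[𝕜] F)}
    (hA : IsClosed A) (hAstar : ∀ a ∈ A, adjoint a ∈ A)
    (hKA : ∀ T : F →L[𝕜] F, IsCompactOperator T → T ∈ A)
    (hAσ : ∃ e ∈ A, IsSelfAdjoint e ∧ A ⊆ closure {x | ∃ a ∈ A, x = e.comp a})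
    (hA1 : ContinuousLinearMap.id 𝕜 F ∉ A) {S : G →L[𝕜] E} (hS : ¬ IsCompactOperator S) :
    ∃ T : E →L[𝕜] F, (∀ a ∈ A, IsCompactOperator (a.comp T)) ∧ ¬ IsCompactOperator (T.comp S) := by
  obtain ⟨e, heA, he, hAe⟩ := hAσ
  have hsurj : ¬ Function.Surjective e := fun h => hA1 <|
    one_mem_of_isUnit_of_subset_closure hA heA (isUnit_of_isSelfAdjoint_of_surjective he h) hAe
  obtain ⟨η, hη, heη⟩ := exists_orthonormal_summable_norm_of_not_surjective
    (denseRange_of_subset_closure_comp hKA hAe) hsurj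
  obtain ⟨ε, hε, u, hu, hSu⟩ := exists_orthonormal_forall_le_norm_of_not_isCompactOperator
    (mt isCompactOperator_adjoint_iff.1 hS)
  refine ⟨orthonormalTransfer hu hη, fun a ha => ?_, ?_⟩
  · refine isCompactOperator_comp_of_adjoint_mem_closure (hAe (hAstar a ha)) ?_
    rw [he.adjoint_eq]
    exact isCompactOperator_comp_orthonormalTransfer hu hη heη
  · exact not_isCompactOperator_comp_of_le_norm_adjoint hu.1 hη
      (inner_orthonormalTransfer hu hη) hε hSu

end Complete

end InnerProductSpace

theorem IsSigmaUnitalOperatorAlgebra.exists_isSelfAdjoint {H : Type*} [NormedAddCommGroup H]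
    [InnerProductSpace ℂ H] [CompleteSpace H] {A : Set (H →L[ℂ] H)}
    (hA : IsSigmaUnitalOperatorAlgebra A) :
    ∃ e ∈ A, IsSelfAdjoint e ∧ A ⊆ closure {x | ∃ a ∈ A, x = e.comp a} :=
  let ⟨e, heA, he, hAe⟩ := hA
  ⟨e, heA, he.isSelfAdjoint, hAe⟩

theorem QM_eq_M_iff_general {𝕜 H₁ H₂ : Type*} [RCLike 𝕜]
    [NormedAddCommGroup H₁] [InnerProductSpace 𝕜 H₁] [CompleteSpace H₁]
    [NormedAddCommGroup H₂] [InnerProductSpace 𝕜 H₂] [CompleteSpace H₂]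
    (hH₁ : ¬ FiniteDimensional 𝕜 H₁) (hH₂ : ¬ FiniteDimensional 𝕜 H₂)
    {A : Set (H₁ →L[𝕜] H₁)} {B : Set (H₂ →L[𝕜] H₂)} (hA : IsClosed A) (hB : IsClosed B)
    (hAstar : ∀ a ∈ A, adjoint a ∈ A) (hBstar : ∀ b ∈ B, adjoint b ∈ B)
    (hKA : ∀ T : H₁ →L[𝕜] H₁, IsCompactOperator T → T ∈ A)
    (hKB : ∀ T : H₂ →L[𝕜] H₂, IsCompactOperator T → T ∈ B)
    (hAσ : ∃ e ∈ A, IsSelfAdjoint e ∧ A ⊆ closure {x | ∃ a ∈ A, x = e.comp a})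
    (hBσ : ∃ e ∈ B, IsSelfAdjoint e ∧ B ⊆ closure {x | ∃ b ∈ B, x = e.comp b}) :
    {T : H₂ →L[𝕜] H₁ | ∀ a ∈ A, ∀ b ∈ B, IsCompactOperator (a.comp (T.comp b))} =
        {T : H₂ →L[𝕜] H₁ | ∀ b ∈ B, IsCompactOperator (T.comp b)} ∩
          {T : H₂ →L[𝕜] H₁ | ∀ a ∈ A, IsCompactOperator (a.comp T)} ↔
      ((ContinuousLinearMap.id 𝕜 H₁ ∈ A ∧ ContinuousLinearMap.id 𝕜 H₂ ∈ B) ∨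
        (A = {T : H₁ →L[𝕜] H₁ | IsCompactOperator T} ∧
          B = {T : H₂ →L[𝕜] H₂ | IsCompactOperator T})) := by
  constructor
  · intro hQM
    have hBcompact (hA1 : ContinuousLinearMap.id 𝕜 H₁ ∉ A) : ∀ b ∈ B, IsCompactOperator b := by
      by_contra! ⟨b, hb, hbK⟩
      obtain ⟨T, hT, hTb⟩ := exists_comp_isCompactOperator_and_not_isCompactOperator_comp
        hA hAstar hKA hAσ hA1 hbK
      exact hTb ((hQM.subset fun a ha c _ => (hT a ha).comp_clm c).1 b hb)
    have hAcompact (hB1 : ContinuousLinearMap.id 𝕜 H₂ ∉ B) : ∀ a ∈ A, IsCompactOperator a := by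
      by_contra! ⟨a, ha, haK⟩
      obtain ⟨T, hT, hTa⟩ := exists_comp_isCompactOperator_and_not_isCompactOperator_comp
        hB hBstar hKB hBσ hB1 (mt isCompactOperator_adjoint_iff.1 haK)
      have hTB (b) (hb : b ∈ B) : IsCompactOperator ((adjoint T).comp b) := by
        simpa [adjoint_comp] using isCompactOperator_adjoint (hT _ (hBstar b hb))
      have haT := (hQM.subset fun c _ b hb => (hTB b hb).clm_comp c).2 a ha
      exact hTa (by simpa [adjoint_comp] using isCompactOperator_adjoint haT)
    by_cases hA1 : ContinuousLinearMap.id 𝕜 H₁ ∈ A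
    · refine .inl ⟨hA1, by_contra fun hB1 => hH₁ ?_⟩
      exact .of_isCompactOperator_id (hAcompact hB1 _ hA1)
    · have hB1 : ContinuousLinearMap.id 𝕜 H₂ ∉ B := fun hB1 =>
        hH₂ (.of_isCompactOperator_id (hBcompact hA1 _ hB1))
      exact .inr ⟨Set.Subset.antisymm (hAcompact hB1) hKA,
        Set.Subset.antisymm (hBcompact hA1) hKB⟩
  · intro h
    refine Set.Subset.antisymm (fun T hT => ?_) fun T hT a _ b hb => (hT.1 b hb).clm_comp a
    rcases h with ⟨hA1, hB1⟩ | ⟨rfl, rfl⟩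
    · have hTK : IsCompactOperator T := hT _ hA1 _ hB1
      exact ⟨fun b _ => hTK.comp_clm b, fun a _ => hTK.clm_comp a⟩
    · exact ⟨fun b hb => IsCompactOperator.clm_comp hb T,
        fun a ha => IsCompactOperator.comp_clm ha T⟩

/-- With `QM(X) = {T : a ∘ T ∘ b compact ∀ a ∈ A, b ∈ B}` and
`M(X) = LM(X) ∩ RM(X)`, one has `QM(X) = M(X)` iff (`1 ∈ A` and `1 ∈ B`) or
(`A = K(H₁)` and `B = K(H₂)`). -/
theorem QM_eq_M_iff
    {H₁ H₂ : Type*} [NormedAddCommGroup H₁] [InnerProductSpace ℂ H₁] [CompleteSpace H₁]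
    [NormedAddCommGroup H₂] [InnerProductSpace ℂ H₂] [CompleteSpace H₂]
    [TopologicalSpace.SeparableSpace H₁] [TopologicalSpace.SeparableSpace H₂]
    (hH₁ : ¬ FiniteDimensional ℂ H₁) (hH₂ : ¬ FiniteDimensional ℂ H₂)
    {A : Set (H₁ →L[ℂ] H₁)} {B : Set (H₂ →L[ℂ] H₂)}
    (hA : IsClosedStarSubalgebraOfOperators A) (hB : IsClosedStarSubalgebraOfOperators B)
    (hKA : ∀ T : H₁ →L[ℂ] H₁, IsCompactOperator T → T ∈ A)
    (hKB : ∀ T : H₂ →L[ℂ] H₂, IsCompactOperator T → T ∈ B)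
    (hAσ : IsSigmaUnitalOperatorAlgebra A) (hBσ : IsSigmaUnitalOperatorAlgebra B) :
    {T : H₂ →L[ℂ] H₁ | ∀ a ∈ A, ∀ b ∈ B, IsCompactOperator (a.comp (T.comp b))} =
        {T : H₂ →L[ℂ] H₁ | ∀ b ∈ B, IsCompactOperator (T.comp b)} ∩
          {T : H₂ →L[ℂ] H₁ | ∀ a ∈ A, IsCompactOperator (a.comp T)} ↔
      ((ContinuousLinearMap.id ℂ H₁ ∈ A ∧ ContinuousLinearMap.id ℂ H₂ ∈ B) ∨
        (A = {T : H₁ →L[ℂ] H₁ | IsCompactOperator T} ∧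
          B = {T : H₂ →L[ℂ] H₂ | IsCompactOperator T})) :=
  QM_eq_M_iff_general hH₁ hH₂ hA.isClosed hB.isClosed hA.star_mem hB.star_mem hKA hKB
    hAσ.exists_isSelfAdjoint hBσ.exists_isSelfAdjoint
end
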